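/- Assume additionally α ≠ 0 and p ≠ n/2. Then L_1 M = M L_1, where L_1 is the symmetric 2(N+1)×2(N+1) real matrix whose only nonzero entries (1-based indexing, together with the symmetric positions) are, for k = 1, …, N+1: (L_1)_{2k,2k} = (n-p+k-1)(p+k)/((p+1)(n-p)); (L_1)_{2k-1,2k} = -(n-p+N+1)(p+N+1)/(α(p+1)(n-2p)) · √( p(p+k)(n-p+k-1) / ((n-p+k)(p+k-1)(n-p)) ); and for k = 1, …, N: (L_1)_{2k,2k+2} = (N-k+1)(N+n+k+1)/(α(p+1)(n-p)) · √( k(n-p+k-1)(p+1+k)(n+k) / ((n+2k-1)(n+2k+1)(p+k)(n-p+k)) ). -/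

import Mathlib

open Matrix

/-- Pochhammer symbol `(a)_k = a (a+1) ⋯ (a+k-1)`. -/
noncomputable def poch (a : ℝ) (k : ℕ) : ℝ := ∏ i ∈ Finset.range k, (a + i)

/-- Gegenbauer polynomial `C_w^λ(x)`, with the convention `C_w^λ = 0` for `w < 0`. -/
noncomputable def geg (l : ℝ) (w : ℤ) (x : ℝ) : ℝ :=
  if w < 0 then 0 else
    poch (2 * l) w.toNat / (w.toNat.factorial : ℝ) *
      ∑ k ∈ Finset.range (w.toNat + 1),
        (poch (-(w.toNat : ℝ)) k * poch ((w.toNat : ℝ) + 2 * l) k) /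
            (poch (l + 1 / 2) k * (k.factorial : ℝ)) * ((1 - x) / 2) ^ k

/-- The weight matrix `W_{p,n}(x)`. -/
noncomputable def Wmat (n : ℕ) (p : ℝ) (x : ℝ) : Matrix (Fin 2) (Fin 2) ℝ :=
  (1 - x ^ 2) ^ ((n : ℝ) / 2 - 1) •
    !![p * x ^ 2 + (n : ℝ) - p, -(n : ℝ) * x; -(n : ℝ) * x, ((n : ℝ) - p) * x ^ 2 + p]

/-- The matrix valued polynomial `P_w`. -/
noncomputable def Pmat (n : ℕ) (p : ℝ) (w : ℕ) (x : ℝ) : Matrix (Fin 2) (Fin 2) ℝ :=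
  !![1 / ((n : ℝ) + 1) * geg (((n : ℝ) + 1) / 2) (w : ℤ) x +
        1 / (p + w) * geg (((n : ℝ) + 3) / 2) ((w : ℤ) - 2) x,
      1 / (p + w) * geg (((n : ℝ) + 3) / 2) ((w : ℤ) - 1) x;
      1 / ((n : ℝ) - p + w) * geg (((n : ℝ) + 3) / 2) ((w : ℤ) - 1) x,
      1 / ((n : ℝ) + 1) * geg (((n : ℝ) + 1) / 2) (w : ℤ) x +
        1 / ((n : ℝ) - p + w) * geg (((n : ℝ) + 3) / 2) ((w : ℤ) - 2) x]

/-- The normalizing matrix `S_w`: the (diagonal, positive definite) inverse square root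
of `‖P_w‖² = ∫_{-1}^1 P_w W_{p,n} P_w^T dx`, given explicitly. -/
noncomputable def Smat (n : ℕ) (p : ℝ) (w : ℕ) : Matrix (Fin 2) (Fin 2) ℝ :=
  Real.sqrt (((w.factorial : ℝ) * ((n : ℝ) + 1) * ((n : ℝ) + 2 * w + 1) *
        Real.Gamma ((n : ℝ) / 2 + 3 / 2)) /
      (Real.sqrt Real.pi * 2 ^ (w / 2) * Real.Gamma ((n : ℝ) / 2 + 1 + (w / 2 : ℕ)) *
        ∏ k ∈ Finset.range ((w + 1) / 2), ((n : ℝ) + 2 * k + 1))) •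
    Matrix.diagonal ![Real.sqrt ((p + w) / (p * ((n : ℝ) - p + w + 1))),
      Real.sqrt (((n : ℝ) - p + w) / (((n : ℝ) - p) * (p + w + 1)))]

/-- The orthonormal matrix valued polynomials `Q_w = S_w P_w`. -/
noncomputable def Qmat (n : ℕ) (p : ℝ) (w : ℕ) (x : ℝ) : Matrix (Fin 2) (Fin 2) ℝ :=
  Smat n p w * Pmat n p w x

/-- The `2 × 2` block `M^{i,j} = ∫_{-1}^α Q_i(x) W_{p,n}(x) Q_j(x)^T dx`. -/
noncomputable def Mblk (n : ℕ) (p α : ℝ) (i j : ℕ) : Matrix (Fin 2) (Fin 2) ℝ :=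
  Matrix.of fun a b : Fin 2 =>
    ∫ x in (-1 : ℝ)..α, (Qmat n p i x * Wmat n p x * (Qmat n p j x)ᵀ) a b

/-- The full `2(N+1) × 2(N+1)` matrix `M`, with (1-based) entries
`M_{2i+1,2j+1} = M^{i,j}_{11}`, `M_{2i+1,2j+2} = M^{i,j}_{12}`,
`M_{2i+2,2j+1} = M^{i,j}_{21}`, `M_{2i+2,2j+2} = M^{i,j}_{22}`. -/
noncomputable def Mfull (n : ℕ) (p α : ℝ) (N : ℕ) :
    Matrix (Fin (2 * (N + 1))) (Fin (2 * (N + 1))) ℝ :=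
  Matrix.of fun r c =>
    Mblk n p α (r.val / 2) (c.val / 2) ⟨r.val % 2, by omega⟩ ⟨c.val % 2, by omega⟩

/-- The even diagonal entries `(L_1)_{2k,2k}`. -/
noncomputable def L1d (n : ℕ) (p : ℝ) (k : ℕ) : ℝ :=
  ((n : ℝ) - p + k - 1) * (p + k) / ((p + 1) * ((n : ℝ) - p))

/-- The entries `(L_1)_{2k-1,2k}`. -/
noncomputable def L1b (n : ℕ) (p α : ℝ) (N : ℕ) (k : ℕ) : ℝ :=
  -(((n : ℝ) - p + N + 1) * (p + N + 1)) / (α * (p + 1) * ((n : ℝ) - 2 * p)) *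
    Real.sqrt (p * (p + k) * ((n : ℝ) - p + k - 1) /
      (((n : ℝ) - p + k) * (p + k - 1) * ((n : ℝ) - p)))

/-- The entries `(L_1)_{2k,2k+2}`. -/
noncomputable def L1c (n : ℕ) (p α : ℝ) (N : ℕ) (k : ℕ) : ℝ :=
  ((N : ℝ) - k + 1) * ((N : ℝ) + n + k + 1) / (α * (p + 1) * ((n : ℝ) - p)) *
    Real.sqrt ((k : ℝ) * ((n : ℝ) - p + k - 1) * (p + 1 + k) * ((n : ℝ) + k) /
      (((n : ℝ) + 2 * k - 1) * ((n : ℝ) + 2 * k + 1) * (p + k) * ((n : ℝ) - p + k)))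

/-- The symmetric matrix `L_1`: in 1-based indexing its only nonzero entries (up to
symmetry) are `(L_1)_{2k,2k}`, `(L_1)_{2k-1,2k}` for `k = 1, …, N+1`, and
`(L_1)_{2k,2k+2}` for `k = 1, …, N`. -/
noncomputable def L1 (n : ℕ) (p α : ℝ) (N : ℕ) :
    Matrix (Fin (2 * (N + 1))) (Fin (2 * (N + 1))) ℝ :=
  Matrix.of fun i j =>
    let r := i.val + 1
    let s := j.val + 1
    if r = s ∧ r % 2 = 0 then L1d n p (r / 2)
    else if s = r + 1 ∧ r % 2 = 1 then L1b n p α N (s / 2)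
    else if r = s + 1 ∧ s % 2 = 1 then L1b n p α N (r / 2)
    else if s = r + 2 ∧ r % 2 = 0 then L1c n p α N (r / 2)
    else if r = s + 2 ∧ s % 2 = 0 then L1c n p α N (s / 2)
    else 0

set_option linter.unusedSimpArgs false

/-! ### Gegenbauer polynomials -/

lemma poch_succ (a : ℝ) (k : ℕ) : poch a (k + 1) = poch a k * (a + k) := by
  simp [poch, Finset.prod_range_succ]

lemma poch_succ' (a : ℝ) (k : ℕ) : poch a (k + 1) = a * poch (a + 1) k := by
  unfold poch
  rw [Finset.prod_range_succ']
  push_cast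
  rw [mul_comm]
  congr 1
  · simp
  · exact Finset.prod_congr rfl fun i _ => by ring

lemma poch_shift (a : ℝ) (k : ℕ) : poch a k * (a + k) = a * poch (a + 1) k := by
  rw [← poch_succ, poch_succ']

lemma poch_pos {a : ℝ} (ha : 0 < a) (k : ℕ) : 0 < poch a k :=
  Finset.prod_pos fun i _ => by positivity

lemma poch_neg_zero (w k : ℕ) (h : w < k) : poch (-(w : ℝ)) k = 0 :=
  Finset.prod_eq_zero (Finset.mem_range.2 h) (by simp)

/-- Coefficients of the Gegenbauer polynomial in powers of `(1-x)/2`. -/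
noncomputable def gco (l : ℝ) (w k : ℕ) : ℝ :=
  poch (2 * l) w / (w.factorial : ℝ) *
    ((poch (-(w : ℝ)) k * poch ((w : ℝ) + 2 * l) k) / (poch (l + 1 / 2) k * (k.factorial : ℝ)))

open Polynomial in
/-- Gegenbauer polynomial as a polynomial in `(1-x)/2`. -/
noncomputable def gpol (l : ℝ) (w : ℕ) : Polynomial ℝ :=
  ∑ k ∈ Finset.range (w + 1), Polynomial.monomial k (gco l w k)

lemma gpol_coeff (l : ℝ) (w k : ℕ) : (gpol l w).coeff k = gco l w k := by
  unfold gpol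
  rw [Polynomial.finsetSum_coeff]
  simp only [Polynomial.coeff_monomial]
  rw [Finset.sum_ite_eq']
  split_ifs with h
  · rfl
  · rw [Finset.mem_range, not_lt] at h
    unfold gco
    rw [poch_neg_zero w k (by omega)]
    simp

lemma geg_nat (l : ℝ) (w : ℕ) (x : ℝ) : geg l (w : ℤ) x = (gpol l w).eval ((1 - x) / 2) := by
  unfold geg gpol
  rw [if_neg (by omega), Polynomial.eval_finsetSum, Finset.mul_sum]
  refine Finset.sum_congr rfl fun k _ => ?_
  simp only [Polynomial.eval_monomial, gco, Int.toNat_natCast]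
  ring

lemma gco_succ_k {l : ℝ} (hl : 0 < l) (w k : ℕ) :
    gco l w (k + 1) * (((k : ℝ) + 1) * (l + 1 / 2 + k)) =
      gco l w k * (((k : ℝ) - w) * (w + 2 * l + k)) := by
  have h1 := (poch_pos (a := l + 1 / 2) (by positivity) k).ne'
  have h2 : l + 1 / 2 + (k : ℝ) ≠ 0 := by positivity
  unfold gco
  rw [poch_succ, poch_succ, poch_succ, Nat.factorial_succ]
  push_cast
  field_simp
  ring

lemma gco_succ_w {l : ℝ} (hl : 0 < l) (w k : ℕ) :
    gco l w k * (w + 2 * l + k) = gco l (w + 1) k * ((w : ℝ) + 1 - k) := by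
  have h1 := (poch_pos (a := l + 1 / 2) (by positivity) k).ne'
  have e1 := poch_shift (-((w : ℝ) + 1)) k
  have e2 := poch_shift ((w : ℝ) + 2 * l) k
  rw [show -((w : ℝ) + 1) + 1 = -w by ring] at e1
  rw [show (w : ℝ) + 2 * l + 1 = w + 1 + 2 * l by ring] at e2
  unfold gco
  rw [poch_succ, Nat.factorial_succ]
  push_cast
  rw [show 2 * l + (w : ℝ) = w + 2 * l by ring]
  generalize poch (l + 1 / 2) k = c1 at *
  generalize poch (-(w : ℝ)) k = c2 at *
  generalize poch ((w : ℝ) + 2 * l) k = c3 at *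
  generalize poch ((w : ℝ) + 1 + 2 * l) k = c4 at *
  generalize poch (-((w : ℝ) + 1)) k = c5 at *
  generalize poch (2 * l) w = c6 at *
  field_simp
  linear_combination c6 * ((w : ℝ) + 1) * c2 * e2 + c6 * (w + 2 * l) * c4 * e1

lemma gco_up {l : ℝ} (hl : 0 < l) (w k : ℕ) :
    gco l (w + 1) (k + 1) * ((k : ℝ) + 1) = - 4 * l * gco (l + 1) w k := by
  have h1 := (poch_pos (a := l + 1 + 1 / 2) (by positivity) k).ne'
  have h2 : l + 1 / 2 ≠ 0 := by positivity
  have e1 := poch_shift (2 * l + 1) w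
  have e0 := poch_succ' (2 * l) w
  have e3 := poch_succ' (-((w : ℝ) + 1)) k
  have e4 := poch_succ' ((w : ℝ) + 1 + 2 * l) k
  have e5 := poch_succ' (l + 1 / 2) k
  rw [show -((w : ℝ) + 1) + 1 = -w by ring] at e3
  rw [show (w : ℝ) + 1 + 2 * l + 1 = w + 2 * (l + 1) by ring] at e4
  rw [show l + 1 / 2 + 1 = l + 1 + 1 / 2 by ring] at e5
  rw [show 2 * l + 1 + 1 = 2 * (l + 1) by ring] at e1
  unfold gco
  push_cast
  rw [e0, e3, e4, e5, Nat.factorial_succ, Nat.factorial_succ]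
  push_cast
  generalize poch (l + 1 + 1 / 2) k = c1 at *
  generalize poch (-(w : ℝ)) k = c2 at *
  generalize poch ((w : ℝ) + 2 * (l + 1)) k = c3 at *
  generalize poch (2 * l + 1) w = c4 at *
  generalize poch (2 * (l + 1)) w = c5 at *
  have h3 : 2 * l + 1 ≠ 0 := by positivity
  field_simp
  linear_combination (-4 * c2 * c3) * e1

open Polynomial in
lemma gpol_ode {l : ℝ} (hl : 0 < l) (w : ℕ) :
    (X - X ^ 2) * derivative (derivative (gpol l w)) +
      C (l + 1 / 2) * (1 - C 2 * X) * derivative (gpol l w) +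
      C ((w : ℝ) * (w + 2 * l)) * gpol l w = 0 := by
  ext k
  have h := gco_succ_k hl w k
  have e : (X - X ^ 2) * derivative (derivative (gpol l w)) +
      C (l + 1 / 2) * (1 - C 2 * X) * derivative (gpol l w) +
      C ((w : ℝ) * (w + 2 * l)) * gpol l w =
      X * derivative (derivative (gpol l w)) - X * (X * derivative (derivative (gpol l w))) +
      C (l + 1 / 2) * derivative (gpol l w) - C (l + 1 / 2) * (C 2 * (X * derivative (gpol l w))) +
      C ((w : ℝ) * (w + 2 * l)) * gpol l w := by ring
  rw [e]
  rcases k with _ | _ | k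
  · simp only [coeff_add, coeff_sub, coeff_C_mul, coeff_X_mul, coeff_X_mul_zero, coeff_derivative,
      gpol_coeff, coeff_zero, Nat.cast_zero, Nat.cast_add, Nat.cast_one, zero_add] at h ⊢
    linear_combination h
  · simp only [coeff_add, coeff_sub, coeff_C_mul, coeff_X_mul, coeff_X_mul_zero, coeff_derivative,
      gpol_coeff, coeff_zero, Nat.cast_zero, Nat.cast_add, Nat.cast_one, zero_add] at h ⊢
    linear_combination h
  · simp only [coeff_add, coeff_sub, coeff_C_mul, coeff_X_mul, coeff_X_mul_zero, coeff_derivative,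
      gpol_coeff, coeff_zero, Nat.cast_zero, Nat.cast_add, Nat.cast_one, zero_add] at h ⊢
    linear_combination h

open Polynomial in
lemma gpol_b {l : ℝ} (hl : 0 < l) (w : ℕ) :
    derivative (gpol l w) = (1 - C 2 * X) * derivative (gpol l (w + 1)) +
      C (2 * ((w : ℝ) + 1)) * gpol l (w + 1) := by
  ext k
  have h1 := gco_succ_k hl (w + 1) k
  have h2 := gco_succ_w hl w (k + 1)
  have e : (1 - C 2 * X) * derivative (gpol l (w + 1)) +
      C (2 * ((w : ℝ) + 1)) * gpol l (w + 1) = derivative (gpol l (w + 1)) -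
      C 2 * (X * derivative (gpol l (w + 1))) + C (2 * ((w : ℝ) + 1)) * gpol l (w + 1) := by ring
  rw [e]
  have h3 : l + 1 / 2 + (k : ℝ) ≠ 0 := by positivity
  have h4 : (w : ℝ) + 2 * l + ((k + 1 : ℕ) : ℝ) ≠ 0 := by positivity
  apply mul_right_cancel₀ (mul_ne_zero h3 h4)
  push_cast at h1 h2 h4
  rcases k with _ | k
  · simp only [coeff_add, coeff_sub, coeff_C_mul, coeff_X_mul, coeff_X_mul_zero, coeff_derivative,
      gpol_coeff, coeff_zero, Nat.cast_zero, Nat.cast_add, Nat.cast_one, zero_add] at h1 h2 ⊢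
    linear_combination (l + 1 / 2) * h2 - (2*l+1) * h1
  · simp only [coeff_add, coeff_sub, coeff_C_mul, coeff_X_mul, coeff_X_mul_zero, coeff_derivative,
      gpol_coeff, coeff_zero, Nat.cast_zero, Nat.cast_add, Nat.cast_one, zero_add] at h1 h2 ⊢
    linear_combination (l + 1 / 2 + k + 1) * (k + 2) * h2 - (2*l+1 + 2 * k + 2) * h1

open Polynomial in
lemma gpol_up {l : ℝ} (hl : 0 < l) (w : ℕ) :
    derivative (gpol l (w + 1)) = C (- 4 * l) * gpol (l + 1) w := by
  ext k
  have h1 := gco_up hl w k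
  rw [coeff_derivative, coeff_C_mul, gpol_coeff, gpol_coeff, h1]

/-- Gegenbauer polynomial of parameter `(n+1)/2`. -/
noncomputable def f0 (n w : ℕ) (x : ℝ) : ℝ := (gpol (((n : ℝ) + 1) / 2) w).eval ((1 - x) / 2)

/-- Its first derivative. -/
noncomputable def f1 (n w : ℕ) (x : ℝ) : ℝ :=
  -(1 / 2) * (Polynomial.derivative (gpol (((n : ℝ) + 1) / 2) w)).eval ((1 - x) / 2)

/-- Its second derivative. -/
noncomputable def f2 (n w : ℕ) (x : ℝ) : ℝ :=
  (1 / 4) * (Polynomial.derivative (Polynomial.derivative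
    (gpol (((n : ℝ) + 1) / 2) w))).eval ((1 - x) / 2)

lemma hasDerivAt_eval_half (P : Polynomial ℝ) (x : ℝ) :
    HasDerivAt (fun x : ℝ => P.eval ((1 - x) / 2))
      (-(1 / 2) * (Polynomial.derivative P).eval ((1 - x) / 2)) x := by
  have h1 : HasDerivAt (fun x : ℝ => (1 - x) / 2) (-(1 / 2)) x := by
    have := ((hasDerivAt_id x).const_sub 1).div_const 2
    exact this.congr_deriv (by norm_num)
  have := (P.hasDerivAt ((1 - x) / 2)).comp x h1
  rw [mul_comm]
  exact this

lemma f0_deriv (n w : ℕ) (x : ℝ) : HasDerivAt (f0 n w) (f1 n w x) x :=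
  hasDerivAt_eval_half _ x

lemma f1_deriv (n w : ℕ) (x : ℝ) : HasDerivAt (f1 n w) (f2 n w x) x := by
  have := (hasDerivAt_eval_half (Polynomial.derivative (gpol (((n : ℝ) + 1) / 2) w)) x).const_mul
    (-(1 / 2))
  exact this.congr_deriv (by unfold f2; ring)

lemma f0_ode (n w : ℕ) (x : ℝ) :
    (1 - x ^ 2) * f2 n w x = ((n : ℝ) + 2) * x * f1 n w x - w * (w + n + 1) * f0 n w x := by
  have h := congrArg (Polynomial.eval ((1 - x) / 2))
    (gpol_ode (l := ((n : ℝ) + 1) / 2) (by positivity) w)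
  simp only [Polynomial.eval_add, Polynomial.eval_mul, Polynomial.eval_sub, Polynomial.eval_X,
    Polynomial.eval_pow, Polynomial.eval_C, Polynomial.eval_one, Polynomial.eval_zero] at h
  unfold f0 f1 f2
  linear_combination h

lemma f_b (n w : ℕ) (x : ℝ) :
    f1 n w x = x * f1 n (w + 1) x - (w + 1) * f0 n (w + 1) x := by
  have h := congrArg (Polynomial.eval ((1 - x) / 2))
    (gpol_b (l := ((n : ℝ) + 1) / 2) (by positivity) w)
  simp only [Polynomial.eval_add, Polynomial.eval_mul, Polynomial.eval_sub, Polynomial.eval_X,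
    Polynomial.eval_pow, Polynomial.eval_C, Polynomial.eval_one, Polynomial.eval_zero] at h
  unfold f0 f1
  linear_combination (-(1 / 2)) * h

lemma f_up (n w : ℕ) (x : ℝ) :
    f1 n (w + 1) x = (n + 1) * geg (((n : ℝ) + 3) / 2) w x := by
  have h := congrArg (Polynomial.eval ((1 - x) / 2))
    (gpol_up (l := ((n : ℝ) + 1) / 2) (by positivity) w)
  rw [show ((n : ℝ) + 1) / 2 + 1 = (n + 3) / 2 by ring] at h
  simp only [Polynomial.eval_mul, Polynomial.eval_C] at h
  rw [geg_nat]
  unfold f1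
  linear_combination (-(1 / 2)) * h

lemma f_zero (n : ℕ) (x : ℝ) : f0 n 0 x = 1 := by
  simp [f0, gpol, gco, poch]

lemma f1_zero (n : ℕ) (x : ℝ) : f1 n 0 x = 0 := by
  simp [f1, gpol]

lemma f_b2 (n w : ℕ) (x : ℝ) :
    f2 n w x = x * f2 n (w + 1) x - w * f1 n (w + 1) x := by
  have h1 := f1_deriv n w x
  have h2 := ((hasDerivAt_id x).mul (f1_deriv n (w + 1) x)).sub
    ((f0_deriv n (w + 1) x).const_mul ((w : ℝ) + 1))
  have h3 : HasDerivAt (f1 n w) (1 * f1 n (w + 1) x + id x * f2 n (w + 1) x -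
      ((w : ℝ) + 1) * f1 n (w + 1) x) x := by
    have e : f1 n w = (id * f1 n (w + 1) - fun y => ((w : ℝ) + 1) * f0 n (w + 1) y) := by
      funext y
      exact f_b n w y
    rw [e]
    exact h2
  rw [h1.unique h3]
  simp only [id]
  ring

lemma f_down (n w : ℕ) (x : ℝ) :
    ((w : ℝ) + 1 + n) * f0 n w x = (w + 1) * x * f0 n (w + 1) x + (1 - x ^ 2) * f1 n (w + 1) x := by
  rcases Nat.eq_zero_or_pos w with rfl | hw
  · have h1 := f_b n 0 x
    have h2 := f_up n 0 x
    have h3 : geg (((n : ℝ) + 3) / 2) ((0 : ℕ) : ℤ) x = 1 := by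
      rw [geg_nat]; simp [gpol, gco, poch]
    rw [h3] at h2
    rw [f1_zero] at h1
    rw [f_zero]
    push_cast at h1 h2 ⊢
    linear_combination -h2 - x * h1
  · have hw' : (w : ℝ) ≠ 0 := by positivity
    have o1 := f0_ode n w x
    have o2 := f0_ode n (w + 1) x
    have b1 := f_b n w x
    have b2 := f_b2 n w x
    push_cast at o2
    apply mul_left_cancel₀ hw'
    linear_combination o1 - (1 - x ^ 2) * b2 - x * o2 + (n + 2) * x * b1

lemma f1_succ (n w : ℕ) (x : ℝ) :
    f1 n (w + 1) x = x * f1 n w x + (w + n + 1) * f0 n w x := by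
  linear_combination (-x) * f_b n w x - f_down n w x

lemma f0_succ (n w : ℕ) (x : ℝ) :
    ((w : ℝ) + 1) * f0 n (w + 1) x = (w + n + 1) * x * f0 n w x - (1 - x ^ 2) * f1 n w x := by
  linear_combination (-x) * f_down n w x + (1 - x ^ 2) * f_b n w x

lemma geg_m1 (n w : ℕ) (x : ℝ) :
    geg (((n : ℝ) + 3) / 2) ((w : ℤ) - 1) x = f1 n w x / (n + 1) := by
  have h : (n : ℝ) + 1 ≠ 0 := by positivity
  rcases w with _ | w
  · rw [f1_zero]; simp [geg]
  · rw [f_up]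
    push_cast
    rw [add_sub_cancel_right]
    field_simp

lemma geg_m2 (n w : ℕ) (x : ℝ) :
    geg (((n : ℝ) + 3) / 2) ((w : ℤ) - 2) x = (x * f1 n w x - w * f0 n w x) / (n + 1) := by
  rcases w with _ | w
  · rw [f1_zero]; simp [geg]
  · have := geg_m1 n w x
    push_cast
    rw [← f_b, ← this]
    congr 1
    ring

/-- `(p F + x F', F')`. -/
noncomputable def vv (n : ℕ) (p : ℝ) (w : ℕ) (x : ℝ) : Fin 2 → ℝ :=
  ![p * f0 n w x + x * f1 n w x, f1 n w x]

/-- `(F', (n-p) F + x F')`. -/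
noncomputable def uu (n : ℕ) (p : ℝ) (w : ℕ) (x : ℝ) : Fin 2 → ℝ :=
  ![f1 n w x, ((n : ℝ) - p) * f0 n w x + x * f1 n w x]

lemma Pmat_row0 (n : ℕ) (p : ℝ) (hp : 0 < p) (w : ℕ) (x : ℝ) (a : Fin 2) :
    Pmat n p w x 0 a = 1 / ((n + 1) * (p + w)) * vv n p w x a := by
  have h : (n : ℝ) + 1 ≠ 0 := by positivity
  have h2 : p + w ≠ 0 := by positivity
  have e : geg (((n : ℝ) + 1) / 2) (w : ℤ) x = f0 n w x := geg_nat _ _ _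
  fin_cases a
  · simp only [Pmat, vv, Fin.zero_eta, Fin.mk_one, Matrix.of_apply, Matrix.cons_val_zero, Matrix.cons_val_one, geg_m1,
      geg_m2, e]
    field_simp
    ring
  · simp only [Pmat, vv, Fin.zero_eta, Fin.mk_one, Matrix.of_apply, Matrix.cons_val_zero, Matrix.cons_val_one, geg_m1,
      geg_m2, e]
    field_simp

lemma Pmat_row1 (n : ℕ) (p : ℝ) (hp : p < n) (w : ℕ) (x : ℝ) (a : Fin 2) :
    Pmat n p w x 1 a = 1 / ((n + 1) * (n - p + w)) * uu n p w x a := by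
  have h : (n : ℝ) + 1 ≠ 0 := by positivity
  have h2 : n - p + w ≠ 0 := by
    have : (0 : ℝ) < n - p := by linarith
    positivity
  have e : geg (((n : ℝ) + 1) / 2) (w : ℤ) x = f0 n w x := geg_nat _ _ _
  fin_cases a
  · simp only [Pmat, uu, Fin.zero_eta, Fin.mk_one, Matrix.of_apply, Matrix.cons_val_zero, Matrix.cons_val_one, geg_m1,
      geg_m2, e]
    field_simp
  · simp only [Pmat, uu, Fin.zero_eta, Fin.mk_one, Matrix.of_apply, Matrix.cons_val_zero, Matrix.cons_val_one, geg_m1,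
      geg_m2, e]
    field_simp
    ring

/-! ### The normalizing constants -/

/-- The denominator in `Smat`. -/
noncomputable def gden (n w : ℕ) : ℝ :=
  2 ^ (w / 2) * Real.Gamma ((n : ℝ) / 2 + 1 + (w / 2 : ℕ)) *
        ∏ k ∈ Finset.range ((w + 1) / 2), ((n : ℝ) + 2 * k + 1)

lemma gden_pos (n w : ℕ) : 0 < gden n w := by
  unfold gden
  have h1 : 0 < Real.Gamma ((n : ℝ) / 2 + 1 + (w / 2 : ℕ)) := Real.Gamma_pos_of_pos (by positivity)
  have h2 : 0 < ∏ k ∈ Finset.range ((w + 1) / 2), ((n : ℝ) + 2 * k + 1) :=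
    Finset.prod_pos fun i _ => by positivity
  positivity

lemma gden_succ (n w : ℕ) : gden n (w + 1) = (n + w + 1) * gden n w := by
  unfold gden
  rcases Nat.even_or_odd' w with ⟨m, rfl | rfl⟩
  · rw [show (2 * m + 1) / 2 = m by omega, show (2 * m) / 2 = m by omega,
      show (2 * m + 1 + 1) / 2 = m + 1 by omega, Finset.prod_range_succ]
    push_cast
    ring
  · rw [show (2 * m + 1) / 2 = m by omega, show (2 * m + 1 + 1) / 2 = m + 1 by omega,
      show (2 * m + 1 + 1 + 1) / 2 = m + 1 by omega]
    push_cast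
    rw [show (n : ℝ) / 2 + 1 + (m + 1) = (n / 2 + 1 + m) + 1 by ring,
      Real.Gamma_add_one (by positivity)]
    ring

/-- The scalar factor of `Smat`. -/
noncomputable def sc (n w : ℕ) : ℝ :=
  Real.sqrt (((w.factorial : ℝ) * ((n : ℝ) + 1) * ((n : ℝ) + 2 * w + 1) *
        Real.Gamma ((n : ℝ) / 2 + 3 / 2)) /
      (Real.sqrt Real.pi * 2 ^ (w / 2) * Real.Gamma ((n : ℝ) / 2 + 1 + (w / 2 : ℕ)) *
        ∏ k ∈ Finset.range ((w + 1) / 2), ((n : ℝ) + 2 * k + 1)))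

lemma sc_nonneg (n w : ℕ) : 0 ≤ sc n w := Real.sqrt_nonneg _

lemma sc_sq (n w : ℕ) : sc n w ^ 2 = ((w.factorial : ℝ) * ((n : ℝ) + 1) * ((n : ℝ) + 2 * w + 1) *
        Real.Gamma ((n : ℝ) / 2 + 3 / 2)) / (Real.sqrt Real.pi * gden n w) := by
  have h := gden_pos n w
  have h3 : 0 < Real.Gamma ((n : ℝ) / 2 + 3 / 2) := Real.Gamma_pos_of_pos (by positivity)
  have e : Real.sqrt Real.pi * 2 ^ (w / 2) * Real.Gamma ((n : ℝ) / 2 + 1 + (w / 2 : ℕ)) *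
        ∏ k ∈ Finset.range ((w + 1) / 2), ((n : ℝ) + 2 * k + 1) = Real.sqrt Real.pi * gden n w := by
    unfold gden
    ring
  unfold sc
  rw [e, Real.sq_sqrt (by positivity)]

lemma sc_succ (n w : ℕ) : sc n (w + 1) ^ 2 =
    sc n w ^ 2 * ((w + 1) * (n + 2 * w + 3) / ((n + 2 * w + 1) * (n + w + 1))) := by
  have h := gden_pos n w
  have hpi : 0 < Real.sqrt Real.pi := Real.sqrt_pos.2 Real.pi_pos
  rw [sc_sq, sc_sq, gden_succ, Nat.factorial_succ]
  push_cast
  generalize gden n w = g at *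
  generalize Real.sqrt Real.pi = g' at *
  generalize Real.Gamma _ = g'' at *
  have h1 : (n : ℝ) + 2 * w + 1 ≠ 0 := by positivity
  have h2 : (n : ℝ) + w + 1 ≠ 0 := by positivity
  field_simp
  ring

/-- Normalization of the first row. -/
noncomputable def sg (n : ℕ) (p : ℝ) (w : ℕ) : ℝ :=
  sc n w * Real.sqrt ((p + w) / (p * ((n : ℝ) - p + w + 1))) * (1 / ((n + 1) * (p + w)))

/-- Normalization of the second row. -/
noncomputable def ta (n : ℕ) (p : ℝ) (w : ℕ) : ℝ :=
  sc n w * Real.sqrt (((n : ℝ) - p + w) / (((n : ℝ) - p) * (p + w + 1))) *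
    (1 / ((n + 1) * (n - p + w)))

lemma Qmat_row0 (n : ℕ) (p : ℝ) (hp : 0 < p) (w : ℕ) (x : ℝ) (a : Fin 2) :
    Qmat n p w x 0 a = sg n p w * vv n p w x a := by
  unfold Qmat Smat
  rw [Matrix.smul_mul, Matrix.smul_apply, Matrix.diagonal_mul, Pmat_row0 n p hp, sg, sc, smul_eq_mul]
  simp only [Matrix.cons_val_zero]
  ring

lemma Qmat_row1 (n : ℕ) (p : ℝ) (hp : p < n) (w : ℕ) (x : ℝ) (a : Fin 2) :
    Qmat n p w x 1 a = ta n p w * uu n p w x a := by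
  unfold Qmat Smat
  rw [Matrix.smul_mul, Matrix.smul_apply, Matrix.diagonal_mul, Pmat_row1 n p hp, ta, sc, smul_eq_mul]
  simp only [Matrix.cons_val_one, Matrix.cons_val_zero, Matrix.cons_val_fin_one]
  ring

/-- The square root in `L1b`, shifted index. -/
noncomputable def be (n : ℕ) (p : ℝ) (k : ℕ) : ℝ :=
  Real.sqrt (p * (p + k) * ((n : ℝ) - p + k - 1) /
      (((n : ℝ) - p + k) * (p + k - 1) * ((n : ℝ) - p)))

/-- The square root in `L1c`. -/
noncomputable def ga (n : ℕ) (p : ℝ) (k : ℕ) : ℝ :=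
  Real.sqrt ((k : ℝ) * ((n : ℝ) - p + k - 1) * (p + 1 + k) * ((n : ℝ) + k) /
      (((n : ℝ) + 2 * k - 1) * ((n : ℝ) + 2 * k + 1) * (p + k) * ((n : ℝ) - p + k)))

lemma be_sq (n : ℕ) (p : ℝ) (hp : 0 < p) (hpn : p < n) (w : ℕ) :
    be n p (w + 1) ^ 2 = p * (p + w + 1) * ((n : ℝ) - p + w) /
      (((n : ℝ) - p + w + 1) * (p + w) * ((n : ℝ) - p)) := by
  have hq : (0 : ℝ) < n - p := by linarith
  unfold be
  push_cast
  rw [show (n : ℝ) - p + (w + 1) - 1 = n - p + w by ring, show p + ((w : ℝ) + 1) - 1 = p + w by ring,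
    ← add_assoc, ← add_assoc, Real.sq_sqrt (by positivity)]

lemma ga_sq (n : ℕ) (p : ℝ) (hp : 0 < p) (hpn : p < n) (w : ℕ) :
    ga n p (w + 1) ^ 2 = ((w : ℝ) + 1) * ((n : ℝ) - p + w) * (p + w + 2) * ((n : ℝ) + w + 1) /
      (((n : ℝ) + 2 * w + 1) * ((n : ℝ) + 2 * w + 3) * (p + w + 1) * ((n : ℝ) - p + w + 1)) := by
  have hq : (0 : ℝ) < n - p := by linarith
  unfold ga
  push_cast
  rw [show (n : ℝ) - p + (w + 1) - 1 = n - p + w by ring,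
    show (n : ℝ) + 2 * ((w : ℝ) + 1) - 1 = n + 2 * w + 1 by ring,
    show (n : ℝ) + 2 * ((w : ℝ) + 1) + 1 = n + 2 * w + 3 by ring,
    show p + 1 + ((w : ℝ) + 1) = p + w + 2 by ring, ← add_assoc, ← add_assoc, ← add_assoc,
    Real.sq_sqrt (by positivity)]

lemma sg_nonneg (n : ℕ) (p : ℝ) (hp : 0 < p) (w : ℕ) : 0 ≤ sg n p w := by
  have := sc_nonneg n w
  unfold sg
  positivity

lemma ta_nonneg (n : ℕ) (p : ℝ) (hpn : p < n) (w : ℕ) : 0 ≤ ta n p w := by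
  have := sc_nonneg n w
  have hq : (0 : ℝ) < n - p := by linarith
  unfold ta
  positivity

lemma sg_sq (n : ℕ) (p : ℝ) (hp : 0 < p) (hpn : p < n) (w : ℕ) : sg n p w ^ 2 =
    sc n w ^ 2 * (1 / (p * (p + w) * ((n : ℝ) - p + w + 1) * (n + 1) ^ 2)) := by
  have hq : (0 : ℝ) < n - p := by linarith
  unfold sg
  rw [mul_pow, mul_pow, Real.sq_sqrt (by positivity)]
  generalize sc n w = s
  have : (n : ℝ) - p + w + 1 ≠ 0 := by positivity
  field_simp

lemma ta_sq (n : ℕ) (p : ℝ) (hp : 0 < p) (hpn : p < n) (w : ℕ) : ta n p w ^ 2 =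
    sc n w ^ 2 * (1 / (((n : ℝ) - p) * ((n : ℝ) - p + w) * (p + w + 1) * (n + 1) ^ 2)) := by
  have hq : (0 : ℝ) < n - p := by linarith
  unfold ta
  rw [mul_pow, mul_pow, Real.sq_sqrt (by positivity)]
  generalize sc n w = s
  have : (n : ℝ) - p + w ≠ 0 := by positivity
  field_simp

lemma be_ta (n : ℕ) (p : ℝ) (hp : 0 < p) (hpn : p < n) (w : ℕ) :
    be n p (w + 1) * ta n p w = sg n p w * (p / (n - p)) := by
  have hq : (0 : ℝ) < n - p := by linarith
  have h1 := sg_nonneg n p hp w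
  have h2 := ta_nonneg n p hpn w
  have h3 : 0 ≤ be n p (w + 1) := Real.sqrt_nonneg _
  rw [← sq_eq_sq₀ (by positivity) (by positivity), mul_pow, mul_pow, be_sq n p hp hpn,
    ta_sq n p hp hpn, sg_sq n p hp hpn]
  generalize sc n w = s
  generalize (n : ℝ) - p = q at *
  have : q + w ≠ 0 := by positivity
  have : q + w + 1 ≠ 0 := by positivity
  field_simp

lemma be_sg (n : ℕ) (p : ℝ) (hp : 0 < p) (hpn : p < n) (w : ℕ) :
    be n p (w + 1) * sg n p w = ta n p w * ((p + w + 1) * ((n : ℝ) - p + w) /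
      (((n : ℝ) - p + w + 1) * (p + w))) := by
  have hq : (0 : ℝ) < n - p := by linarith
  have h1 := sg_nonneg n p hp w
  have h2 := ta_nonneg n p hpn w
  have h3 : 0 ≤ be n p (w + 1) := Real.sqrt_nonneg _
  rw [← sq_eq_sq₀ (by positivity) (by positivity), mul_pow, mul_pow, be_sq n p hp hpn,
    ta_sq n p hp hpn, sg_sq n p hp hpn]
  generalize sc n w = s
  generalize (n : ℝ) - p = q at *
  have : q + w ≠ 0 := by positivity
  have : q + w + 1 ≠ 0 := by positivity
  field_simp

lemma ga_hi (n : ℕ) (p : ℝ) (hp : 0 < p) (hpn : p < n) (w : ℕ) :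
    ga n p (w + 1) * ta n p (w + 1) = ta n p w * (((w : ℝ) + 1) * ((n : ℝ) - p + w) /
      (((n : ℝ) + 2 * w + 1) * ((n : ℝ) - p + w + 1))) := by
  have hq : (0 : ℝ) < n - p := by linarith
  have h1 := ta_nonneg n p hpn (w + 1)
  have h2 := ta_nonneg n p hpn w
  have h3 : 0 ≤ ga n p (w + 1) := Real.sqrt_nonneg _
  rw [← sq_eq_sq₀ (by positivity) (by positivity), mul_pow, mul_pow, ga_sq n p hp hpn,
    ta_sq n p hp hpn, ta_sq n p hp hpn, sc_succ]
  generalize sc n w = s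
  push_cast
  have : (n : ℝ) - p + w ≠ 0 := by positivity
  have : (n : ℝ) - p + w + 1 ≠ 0 := by positivity
  have : (n : ℝ) - p + (w + 1) ≠ 0 := by positivity
  have : (n : ℝ) + 2 * w + 1 ≠ 0 := by positivity
  have : (n : ℝ) + 2 * w + 3 ≠ 0 := by positivity
  have : (n : ℝ) + w + 1 ≠ 0 := by positivity
  generalize (n : ℝ) - p = q at *
  field_simp
  ring

lemma ga_lo (n : ℕ) (p : ℝ) (hp : 0 < p) (hpn : p < n) (w : ℕ) :
    ga n p (w + 1) * ta n p w = ta n p (w + 1) * ((p + w + 2) * ((n : ℝ) + w + 1) /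
      (((n : ℝ) + 2 * w + 3) * (p + w + 1))) := by
  have hq : (0 : ℝ) < n - p := by linarith
  have h1 := ta_nonneg n p hpn (w + 1)
  have h2 := ta_nonneg n p hpn w
  have h3 : 0 ≤ ga n p (w + 1) := Real.sqrt_nonneg _
  rw [← sq_eq_sq₀ (by positivity) (by positivity), mul_pow, mul_pow, ga_sq n p hp hpn,
    ta_sq n p hp hpn, ta_sq n p hp hpn, sc_succ]
  generalize sc n w = s
  push_cast
  have : (n : ℝ) - p + w ≠ 0 := by positivity
  have : (n : ℝ) - p + w + 1 ≠ 0 := by positivity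
  have : (n : ℝ) - p + (w + 1) ≠ 0 := by positivity
  have : (n : ℝ) + 2 * w + 1 ≠ 0 := by positivity
  have : (n : ℝ) + 2 * w + 3 ≠ 0 := by positivity
  have : (n : ℝ) + w + 1 ≠ 0 := by positivity
  generalize (n : ℝ) - p = q at *
  field_simp
  ring

/-! ### The bilinear form and the pointwise identities -/

/-- `y W₀(x) zᵀ`, with `W = (1-x²)^{n/2-1} W₀`. -/
noncomputable def bil (n : ℕ) (p x : ℝ) (y z : Fin 2 → ℝ) : ℝ :=
  (p * x ^ 2 + n - p) * (y 0 * z 0) - n * x * (y 0 * z 1 + y 1 * z 0) +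
    ((n - p) * x ^ 2 + p) * (y 1 * z 1)

/-- `(w+1) u_{w+1}`. -/
noncomputable def hi (n : ℕ) (p : ℝ) (w : ℕ) (x : ℝ) : Fin 2 → ℝ :=
  fun a => ((w : ℝ) + 1) * uu n p (w + 1) x a

/-- `(n+w) u_{w-1}`. -/
noncomputable def lo (n : ℕ) (p : ℝ) (w : ℕ) (x : ℝ) : Fin 2 → ℝ :=
  ![(n + w) * (x * f1 n w x - w * f0 n w x),
    (n - p) * (w * x * f0 n w x + (1 - x ^ 2) * f1 n w x) +
      x * ((n + w) * (x * f1 n w x - w * f0 n w x))]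

lemma lo_zero (n : ℕ) (p : ℝ) (x : ℝ) : lo n p 0 x = 0 := by
  unfold lo
  rw [f1_zero]
  ext a
  fin_cases a <;> simp

lemma lo_succ (n : ℕ) (p : ℝ) (w : ℕ) (x : ℝ) (a : Fin 2) :
    lo n p (w + 1) x a = ((n : ℝ) + w + 1) * uu n p w x a := by
  have h1 := f_b n w x
  have h2 := f_down n w x
  fin_cases a
  · simp [lo, uu]
    rw [h1]
    ring
  · simp [lo, uu]
    rw [h1]
    linear_combination ((p : ℝ) - n) * h2

/-- Eigenvalue. -/
noncomputable def DD (n : ℕ) (p : ℝ) (w : ℕ) : ℝ := ((n : ℝ) - p + w) * (p + w + 1)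

/-- Closed form of the non diagonal part of `L₁` acting on `Q`. -/
noncomputable def rr (n : ℕ) (p kap : ℝ) (w : ℕ) (x : ℝ) : Fin 2 → ℝ :=
  ![(-p * (n - p) * kap - DD n p w) * f0 n w x + x * (-p * kap - DD n p w) * f1 n w x,
    x * ((n - p) * (kap * (n - 2 * p) - p * (n - p)) - (n - p) * (n + 1) -
      (n - p + 1) * (w * (w + n + 1))) * f0 n w x +
    (-(n - p) * kap + (-p * kap - DD n p w + (n - p) * kap) * x ^ 2) * f1 n w x]

lemma rr_eq (n : ℕ) (p kap : ℝ) (hp : 0 < p) (hpn : p < n) (w : ℕ) (x : ℝ) (a : Fin 2)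
    (T : ℝ) (hT : T = kap * (n - 2 * p) - p * (n - p)) :
    rr n p kap w x a = -(n - p) * kap * ((p + w + 1) * ((n : ℝ) - p + w) /
      (((n : ℝ) - p + w + 1) * (p + w))) * vv n p w x a +
      (T - (w + 1) * (w + 1 + n)) * ((n : ℝ) - p + w) /
        (((n : ℝ) + 2 * w + 1) * ((n : ℝ) - p + w + 1)) * hi n p w x a +
      (T - w * (w + n)) * (p + w + 1) / (((n : ℝ) + 2 * w + 1) * (p + w)) * lo n p w x a := by
  have hq : (0 : ℝ) < n - p := by linarith
  have h1 : (n : ℝ) - p + w + 1 ≠ 0 := by positivity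
  have h2 : (n : ℝ) + 2 * w + 1 ≠ 0 := by positivity
  have h3 : p + w ≠ 0 := by positivity
  have e1 := f1_succ n w x
  have e2 := f0_succ n w x
  subst hT
  fin_cases a
  · simp [rr, vv, hi, uu, lo, DD]
    rw [e1]
    generalize f0 n w x = F at *
    generalize f1 n w x = G at *
    field_simp
    ring
  · have e3 : hi n p w x 1 = ((n : ℝ) - p) * ((w + n + 1) * x * f0 n w x - (1 - x ^ 2) * f1 n w x) +
        x * (w + 1) * (x * f1 n w x + (w + n + 1) * f0 n w x) := by
      simp [hi, uu]
      rw [e1]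
      linear_combination ((n : ℝ) - p) * e2
    simp only [Fin.mk_one]
    rw [e3]
    simp [rr, vv, lo, DD]
    generalize f0 n w x = F at *
    generalize f1 n w x = G at *
    field_simp
    ring

lemma alg11 (n : ℕ) (p : ℝ) (i j : ℕ) (x : ℝ) :
    bil n p x (uu n p i x) (vv n p j x) = bil n p x (uu n p j x) (vv n p i x) := by
  simp [bil, uu, vv]
  ring

lemma alg12 (n : ℕ) (p kap α : ℝ) (i j : ℕ) (x : ℝ) :
    -p * kap * bil n p x (uu n p i x) (uu n p j x) -
      bil n p x (fun a => α * DD n p j * uu n p j x a + rr n p kap j x a) (vv n p i x) =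
    -(1 - x ^ 2) * (-DD n p j * p * (n - p) * (f0 n i x * f0 n j x)) +
      (α - x) * (-n * x * (-DD n p j * p * (n - p) * (f0 n i x * f0 n j x)) + (1 - x ^ 2) *
        (-DD n p j * p * (n - p) * (f1 n i x * f0 n j x + f0 n i x * f1 n j x))) := by
  simp [bil, uu, vv, rr, DD]
  ring

lemma alg22 (n : ℕ) (p kap α : ℝ) (i j : ℕ) (x : ℝ) :
    bil n p x (fun a => α * DD n p i * uu n p i x a + rr n p kap i x a) (uu n p j x) -
      bil n p x (fun a => α * DD n p j * uu n p j x a + rr n p kap j x a) (uu n p i x) =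
    -(1 - x ^ 2) * ((n - p) * ((1 - x ^ 2) * (DD n p i * (f0 n i x * f1 n j x) -
        DD n p j * (f1 n i x * f0 n j x)) -
        (n - p) * (DD n p i - DD n p j) * (x * (f0 n i x * f0 n j x)))) +
      (α - x) * (-n * x * ((n - p) * ((1 - x ^ 2) * (DD n p i * (f0 n i x * f1 n j x) -
        DD n p j * (f1 n i x * f0 n j x)) -
        (n - p) * (DD n p i - DD n p j) * (x * (f0 n i x * f0 n j x)))) + (1 - x ^ 2) *
        ((n - p) * (-(2 * x) * (DD n p i * (f0 n i x * f1 n j x) -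
        DD n p j * (f1 n i x * f0 n j x)) +
        (1 - x ^ 2) * (DD n p i * (f1 n i x * f1 n j x + f0 n i x * f2 n j x) -
        DD n p j * (f2 n i x * f0 n j x + f1 n i x * f1 n j x)) -
        (n - p) * (DD n p i - DD n p j) * (1 * (f0 n i x * f0 n j x) +
          x * (f1 n i x * f0 n j x + f0 n i x * f1 n j x))))) := by
  have h1 := f0_ode n i x
  have h2 := f0_ode n j x
  simp [bil, uu, rr, DD]
  generalize f0 n i x = F at *
  generalize f1 n i x = F1 at *
  generalize f0 n j x = G at *
  generalize f1 n j x = G1 at *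
  generalize f2 n i x = F2 at *
  generalize f2 n j x = G2 at *
  linear_combination (α - x) * (1 - x ^ 2) * (n - p) * ((n - p + j) * (p + j + 1) * G * h1 -
    (n - p + i) * (p + i + 1) * F * h2)

/-! ### Integrals -/

lemma rho_integrable (n : ℕ) (hn : 1 ≤ n) (α : ℝ) (hα : α ∈ Set.Ioo (-1 : ℝ) 1) (g : ℝ → ℝ)
    (hg : Continuous g) :
    IntervalIntegrable (fun x => (1 - x ^ 2) ^ ((n : ℝ) / 2 - 1) * g x) MeasureTheory.volume
      (-1) α := by
  have hn' : (1 : ℝ) ≤ n := by exact_mod_cast hn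
  have h1 : IntervalIntegrable (fun x : ℝ => (1 + x) ^ ((n : ℝ) / 2 - 1)) MeasureTheory.volume
      (-1) α := by
    have := (intervalIntegral.intervalIntegrable_rpow' (a := 0) (b := 1 + α)
      (r := (n : ℝ) / 2 - 1) (by linarith)).comp_add_left 1
    simpa using this
  have hu : Set.uIcc (-1) α = Set.Icc (-1) α := Set.uIcc_of_le hα.1.le
  have h2 : ContinuousOn (fun x : ℝ => (1 - x) ^ ((n : ℝ) / 2 - 1) * g x) (Set.uIcc (-1) α) := by
    rw [hu]
    refine ContinuousOn.mul (ContinuousOn.rpow_const (by fun_prop) ?_) hg.continuousOn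
    intro x hx
    left
    have := hx.2
    have := hα.2
    linarith
  refine (h1.mul_continuousOn h2).congr ?_
  intro x hx
  rw [Set.uIoc_of_le hα.1.le] at hx
  have a1 : 0 ≤ 1 + x := by linarith [hx.1]
  have a2 : 0 ≤ 1 - x := by linarith [hx.2, hα.2]
  simp only
  rw [← mul_assoc, ← Real.mul_rpow a1 a2]
  congr 2
  ring

lemma int_zero (n : ℕ) (hn : 1 ≤ n) (α : ℝ) (hα : α ∈ Set.Ioo (-1 : ℝ) 1) (g b b1 : ℝ → ℝ)
    (hg : Continuous g) (hb : ∀ x, HasDerivAt b (b1 x) x)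
    (h : ∀ x, g x = -(1 - x ^ 2) * b x + (α - x) * (-n * x * b x + (1 - x ^ 2) * b1 x)) :
    ∫ x in (-1 : ℝ)..α, (1 - x ^ 2) ^ ((n : ℝ) / 2 - 1) * g x = 0 := by
  have hn' : (1 : ℝ) ≤ n := by exact_mod_cast hn
  have hbc : Continuous b := continuous_iff_continuousAt.2 fun x => (hb x).continuousAt
  have key := intervalIntegral.integral_eq_sub_of_hasDerivAt_of_le hα.1.le
    (f := fun x => (α - x) * ((1 - x ^ 2) ^ ((n : ℝ) / 2) * b x))
    (f' := fun x => (1 - x ^ 2) ^ ((n : ℝ) / 2 - 1) * g x) ?_ ?_ (rho_integrable n hn α hα g hg)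
  · rw [key]
    have : ((1 : ℝ) - (-1) ^ 2) ^ ((n : ℝ) / 2) = 0 := by
      rw [show (1 : ℝ) - (-1) ^ 2 = 0 by norm_num]
      exact Real.zero_rpow (by positivity)
    simp only [this]
    ring
  · apply Continuous.continuousOn
    refine Continuous.mul (by fun_prop) (Continuous.mul ?_ hbc)
    exact Continuous.rpow_const (by fun_prop) fun x => Or.inr (by positivity)
  · intro x hx
    have hx1 : 0 < 1 - x ^ 2 := by nlinarith [hx.1, hx.2, hα.2]
    have d1 : HasDerivAt (fun x : ℝ => 1 - x ^ 2) (-(2 * x)) x := by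
      have := (hasDerivAt_pow 2 x).const_sub 1
      exact this.congr_deriv (by norm_num)
    have d2 := d1.rpow_const (p := (n : ℝ) / 2) (Or.inl hx1.ne')
    have d3 := ((hasDerivAt_id x).const_sub α).mul (d2.mul (hb x))
    refine d3.congr_deriv ?_
    have e : (1 - x ^ 2) ^ ((n : ℝ) / 2) = (1 - x ^ 2) * (1 - x ^ 2) ^ ((n : ℝ) / 2 - 1) := by
      conv_rhs => rw [← Real.rpow_one_add' hx1.le (by
        have : 0 < (n : ℝ) / 2 := by positivity
        intro hh
        linarith)]
      congr 1
      ring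
    simp only [id, Pi.mul_apply]
    rw [e, h x]
    ring

/-- The truncated inner product. -/
noncomputable def JJ (n : ℕ) (p α : ℝ) (y z : ℝ → Fin 2 → ℝ) : ℝ :=
  ∫ x in (-1 : ℝ)..α, (1 - x ^ 2) ^ ((n : ℝ) / 2 - 1) * bil n p x (y x) (z x)

lemma f0_cont (n w : ℕ) : Continuous (f0 n w) :=
  continuous_iff_continuousAt.2 fun x => (f0_deriv n w x).continuousAt

lemma f1_cont (n w : ℕ) : Continuous (f1 n w) :=
  continuous_iff_continuousAt.2 fun x => (f1_deriv n w x).continuousAt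

lemma uu_cont (n : ℕ) (p : ℝ) (w : ℕ) : Continuous (uu n p w) := by
  have := f0_cont n w
  have := f1_cont n w
  refine continuous_pi fun a => ?_
  fin_cases a <;> simp [uu] <;> fun_prop

lemma vv_cont (n : ℕ) (p : ℝ) (w : ℕ) : Continuous (vv n p w) := by
  have := f0_cont n w
  have := f1_cont n w
  refine continuous_pi fun a => ?_
  fin_cases a <;> simp [vv] <;> fun_prop

lemma lo_cont (n : ℕ) (p : ℝ) (w : ℕ) : Continuous (lo n p w) := by
  have := f0_cont n w
  have := f1_cont n w
  refine continuous_pi fun a => ?_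
  fin_cases a <;> simp [lo] <;> fun_prop

lemma rr_cont (n : ℕ) (p kap : ℝ) (w : ℕ) : Continuous (rr n p kap w) := by
  have := f0_cont n w
  have := f1_cont n w
  refine continuous_pi fun a => ?_
  fin_cases a <;> simp [rr] <;> fun_prop

lemma hi_cont (n : ℕ) (p : ℝ) (w : ℕ) : Continuous (hi n p w) := by
  have := uu_cont n p (w + 1)
  unfold hi
  fun_prop

lemma bil_cont (n : ℕ) (p : ℝ) {y z : ℝ → Fin 2 → ℝ} (hy : Continuous y) (hz : Continuous z) :
    Continuous fun x => bil n p x (y x) (z x) := by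
  unfold bil
  fun_prop

lemma bil_comm (n : ℕ) (p x : ℝ) (y z : Fin 2 → ℝ) : bil n p x y z = bil n p x z y := by
  unfold bil
  ring

lemma JJ_comm (n : ℕ) (p α : ℝ) (y z : ℝ → Fin 2 → ℝ) : JJ n p α y z = JJ n p α z y := by
  unfold JJ
  simp only [bil_comm n p _ (y _)]

lemma JJ_smul (n : ℕ) (p α c : ℝ) (y z : ℝ → Fin 2 → ℝ) :
    JJ n p α (fun x a => c * y x a) z = c * JJ n p α y z := by
  unfold JJ
  rw [← intervalIntegral.integral_const_mul]
  congr 1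
  funext x
  unfold bil
  ring

lemma JJ_smul2 (n : ℕ) (p α c d : ℝ) (y z : ℝ → Fin 2 → ℝ) :
    JJ n p α (fun x a => c * y x a) (fun x a => d * z x a) = c * d * JJ n p α y z := by
  rw [JJ_smul, JJ_comm, JJ_smul, JJ_comm]
  ring

lemma JJ_add (n : ℕ) (hn : 1 ≤ n) (p α : ℝ) (hα : α ∈ Set.Ioo (-1 : ℝ) 1)
    {y y' z : ℝ → Fin 2 → ℝ} (hy : Continuous y) (hy' : Continuous y') (hz : Continuous z) :
    JJ n p α (fun x a => y x a + y' x a) z = JJ n p α y z + JJ n p α y' z := by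
  unfold JJ
  rw [← intervalIntegral.integral_add (rho_integrable n hn α hα _ (bil_cont n p hy hz))
    (rho_integrable n hn α hα _ (bil_cont n p hy' hz))]
  congr 1
  funext x
  unfold bil
  ring

/-- The full image of `u_w` under (rescaled) `L₁`. -/
noncomputable def RR (n : ℕ) (p kap α : ℝ) (w : ℕ) (x : ℝ) : Fin 2 → ℝ :=
  fun a => α * DD n p w * uu n p w x a + rr n p kap w x a

lemma RR_cont (n : ℕ) (p kap α : ℝ) (w : ℕ) : Continuous (RR n p kap α w) := by
  have := uu_cont n p w
  have := rr_cont n p kap w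
  unfold RR
  fun_prop

lemma core11 (n : ℕ) (p α : ℝ) (i j : ℕ) :
    JJ n p α (uu n p i) (vv n p j) = JJ n p α (uu n p j) (vv n p i) := by
  unfold JJ
  simp only [alg11 n p i j]

lemma core12 (n : ℕ) (hn : 1 ≤ n) (p kap α : ℝ) (hα : α ∈ Set.Ioo (-1 : ℝ) 1) (i j : ℕ) :
    -p * kap * JJ n p α (uu n p i) (uu n p j) = JJ n p α (RR n p kap α j) (vv n p i) := by
  have c1 := bil_cont n p (uu_cont n p i) (uu_cont n p j)
  have c2 := bil_cont n p (RR_cont n p kap α j) (vv_cont n p i)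
  have h := int_zero n hn α hα
    (fun x => -p * kap * bil n p x (uu n p i x) (uu n p j x) -
      bil n p x (RR n p kap α j x) (vv n p i x)) _ _ (by fun_prop)
    (fun x => ((f0_deriv n i x).mul (f0_deriv n j x)).const_mul (-DD n p j * p * (n - p)))
    (fun x => alg12 n p kap α i j x)
  rw [← sub_eq_zero]
  unfold JJ
  rw [← intervalIntegral.integral_const_mul, ← intervalIntegral.integral_sub, ← h]
  · congr 1
    funext x
    ring
  · exact (rho_integrable n hn α hα _ c1).const_mul _
  · exact rho_integrable n hn α hα _ c2

lemma core22 (n : ℕ) (hn : 1 ≤ n) (p kap α : ℝ) (hα : α ∈ Set.Ioo (-1 : ℝ) 1) (i j : ℕ) :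
    JJ n p α (RR n p kap α i) (uu n p j) = JJ n p α (RR n p kap α j) (uu n p i) := by
  have c1 := bil_cont n p (RR_cont n p kap α i) (uu_cont n p j)
  have c2 := bil_cont n p (RR_cont n p kap α j) (uu_cont n p i)
  have d1 : ∀ x : ℝ, HasDerivAt (fun x : ℝ => 1 - x ^ 2) (-(2 * x)) x := fun x => by
    have := (hasDerivAt_pow 2 x).const_sub 1
    exact this.congr_deriv (by norm_num)
  have h := int_zero n hn α hα
    (fun x => bil n p x (RR n p kap α i x) (uu n p j x) -
      bil n p x (RR n p kap α j x) (uu n p i x)) _ _ (by fun_prop)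
    (fun x => (((d1 x).mul ((((f0_deriv n i x).mul (f1_deriv n j x)).const_mul (DD n p i)).sub
      (((f1_deriv n i x).mul (f0_deriv n j x)).const_mul (DD n p j)))).sub
      (((hasDerivAt_id x).mul ((f0_deriv n i x).mul (f0_deriv n j x))).const_mul
        ((n - p) * (DD n p i - DD n p j)))).const_mul (n - p))
    (fun x => alg22 n p kap α i j x)
  rw [← sub_eq_zero]
  unfold JJ
  rw [← intervalIntegral.integral_sub, ← h]
  · congr 1
    funext x
    ring
  · exact rho_integrable n hn α hα _ c1
  · exact rho_integrable n hn α hα _ c2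

/-! ### The matrix `M` -/

/-- Rows of `Q`. -/
noncomputable def qrow (n : ℕ) (p : ℝ) (r : ℕ) (x : ℝ) : Fin 2 → ℝ :=
  Qmat n p (r / 2) x ⟨r % 2, by omega⟩

/-- Entries of `M`, natural number indices. -/
noncomputable def MM (n : ℕ) (p α : ℝ) (r c : ℕ) : ℝ := JJ n p α (qrow n p r) (qrow n p c)

lemma Mfull_eq (n : ℕ) (p α : ℝ) (N : ℕ) (r c : Fin (2 * (N + 1))) :
    Mfull n p α N r c = MM n p α r c := by
  unfold Mfull Mblk MM JJ qrow
  simp only [Matrix.of_apply]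
  congr 1
  funext x
  simp only [Matrix.mul_apply, Fin.sum_univ_two, Matrix.transpose_apply, Wmat, Matrix.smul_apply,
    smul_eq_mul, Matrix.of_apply, Matrix.cons_val_zero, Matrix.cons_val_one, bil]
  ring

lemma qrow_even (n : ℕ) (p : ℝ) (hp : 0 < p) (w : ℕ) :
    qrow n p (2 * w) = fun x a => sg n p w * vv n p w x a := by
  funext x a
  unfold qrow
  rw [← Qmat_row0 n p hp]
  congr 1
  · congr 1; omega
  · simp

lemma qrow_odd (n : ℕ) (p : ℝ) (hp : p < n) (w : ℕ) :
    qrow n p (2 * w + 1) = fun x a => ta n p w * uu n p w x a := by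
  funext x a
  unfold qrow
  rw [← Qmat_row1 n p hp]
  have h1 : (2 * w + 1) / 2 = w := by omega
  have h2 : (⟨(2 * w + 1) % 2, by omega⟩ : Fin 2) = 1 := by
    apply Fin.ext; simp
  rw [h1, h2]

lemma row_cont (n : ℕ) (p : ℝ) (hp : 0 < p) (hpn : p < n) (r : ℕ) : Continuous (qrow n p r) := by
  rcases Nat.even_or_odd' r with ⟨m, rfl | rfl⟩
  · have := vv_cont n p m
    rw [qrow_even n p hp]
    fun_prop
  · have := uu_cont n p m
    rw [qrow_odd n p hpn]
    fun_prop

lemma JJ_RR (n : ℕ) (hn : 1 ≤ n) (p : ℝ) (hp : 0 < p) (hpn : p < n) (kap α : ℝ)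
    (hα : α ∈ Set.Ioo (-1 : ℝ) 1) (T : ℝ) (hT : T = kap * (n - 2 * p) - p * (n - p))
    (w : ℕ) (z : ℝ → Fin 2 → ℝ) (hz : Continuous z) :
    JJ n p α (RR n p kap α w) z = α * DD n p w * JJ n p α (uu n p w) z +
      (-(n - p) * kap * ((p + w + 1) * ((n : ℝ) - p + w) /
      (((n : ℝ) - p + w + 1) * (p + w))) * JJ n p α (vv n p w) z +
      (T - (w + 1) * (w + 1 + n)) * ((n : ℝ) - p + w) /
        (((n : ℝ) + 2 * w + 1) * ((n : ℝ) - p + w + 1)) * JJ n p α (hi n p w) z +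
      (T - w * (w + n)) * (p + w + 1) / (((n : ℝ) + 2 * w + 1) * (p + w)) *
        JJ n p α (lo n p w) z) := by
  have c1 := uu_cont n p w
  have c2 := vv_cont n p w
  have c3 := hi_cont n p w
  have c4 := lo_cont n p w
  unfold RR
  simp only [rr_eq n p kap hp hpn w _ _ T hT]
  rw [JJ_add n hn p α hα (by fun_prop) (by fun_prop) hz, JJ_smul,
    JJ_add n hn p α hα (by fun_prop) (by fun_prop) hz,
    JJ_add n hn p α hα (by fun_prop) (by fun_prop) hz, JJ_smul, JJ_smul, JJ_smul]

lemma L1b_eq (n : ℕ) (p α : ℝ) (N k : ℕ) (kap : ℝ) (hp2 : (n : ℝ) - 2 * p ≠ 0)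
    (hk : kap * (n - 2 * p) = (n - p + N + 1) * (p + N + 1)) (hα : α ≠ 0) (hp : 0 < p) :
    L1b n p α N k = -kap / (α * (p + 1)) * be n p k := by
  unfold L1b be
  rw [← hk]
  congr 1
  field_simp

lemma L1c_eq (n : ℕ) (p α : ℝ) (N k : ℕ) (T : ℝ) (hT : T = (N + 1) * (N + 1 + n)) :
    L1c n p α N k = (T - k * (k + n)) / (α * (p + 1) * (n - p)) * ga n p k := by
  unfold L1c ga
  congr 2
  rw [hT]
  ring

lemma odd_row (n : ℕ) (hn : 1 ≤ n) (p : ℝ) (hp : 0 < p) (hpn : p < n) (kap α : ℝ)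
    (hα : α ∈ Set.Ioo (-1 : ℝ) 1) (hα0 : α ≠ 0) (N : ℕ) (hp2 : (n : ℝ) - 2 * p ≠ 0)
    (hk : kap * (n - 2 * p) = (n - p + N + 1) * (p + N + 1)) (i c : ℕ) :
    L1d n p (i + 1) * MM n p α (2 * i + 1) c + L1b n p α N (i + 1) * MM n p α (2 * i) c +
      L1c n p α N (i + 1) * MM n p α (2 * (i + 1) + 1) c +
      L1c n p α N i * MM n p α (2 * (i - 1) + 1) c =
    ta n p i / (α * (p + 1) * (n - p)) * JJ n p α (RR n p kap α i) (qrow n p c) := by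
  have hq : (0 : ℝ) < n - p := by linarith
  have hT : ((N : ℝ) + 1) * (N + 1 + n) = kap * (n - 2 * p) - p * (n - p) := by rw [hk]; ring
  rw [JJ_RR n hn p hp hpn kap α hα _ hT i _ (row_cont n p hp hpn c)]
  unfold MM
  rw [qrow_odd n p hpn i, qrow_even n p hp i, qrow_odd n p hpn (i + 1), JJ_smul, JJ_smul, JJ_smul,
    L1b_eq n p α N (i + 1) kap hp2 hk hα0 hp, L1c_eq n p α N (i + 1) _ rfl,
    L1c_eq n p α N i _ rfl]
  have e1 := be_sg n p hp hpn i
  have e2 := ga_hi n p hp hpn i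
  have e3 : JJ n p α (hi n p i) (qrow n p c) =
      ((i : ℝ) + 1) * JJ n p α (uu n p (i + 1)) (qrow n p c) := by
    unfold hi
    exact JJ_smul ..
  have e4 : ga n p i * JJ n p α (qrow n p (2 * (i - 1) + 1)) (qrow n p c) =
      ta n p i * ((p + i + 1) / ((n + 2 * i + 1) * (p + i))) *
        JJ n p α (lo n p i) (qrow n p c) := by
    rcases i with _ | w
    · have z1 : ga n p 0 = 0 := by simp [ga]
      have z2 : JJ n p α (lo n p 0) (qrow n p c) = 0 := by
        unfold JJ
        simp [lo_zero, bil]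
      rw [z1, z2]
      ring
    · have z1 : JJ n p α (lo n p (w + 1)) (qrow n p c) =
          ((n : ℝ) + w + 1) * JJ n p α (uu n p w) (qrow n p c) := by
        rw [← JJ_smul]
        congr 1
        funext x a
        exact lo_succ n p w x a
      rw [z1, Nat.add_sub_cancel, qrow_odd n p hpn, JJ_smul, ← mul_assoc, ga_lo n p hp hpn]
      push_cast
      have : p + w + 1 ≠ 0 := by positivity
      have : (n : ℝ) + 2 * w + 3 ≠ 0 := by positivity
      rw [show p + (w + 1 : ℝ) + 1 = p + w + 2 by ring, show p + (w + 1 : ℝ) = p + w + 1 by ring,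
        show (n : ℝ) + 2 * (w + 1) + 1 = n + 2 * w + 3 by ring]
      field_simp
  rw [e3]
  have e1' : -kap / (α * (p + 1)) * be n p (i + 1) * (sg n p i * JJ n p α (vv n p i) (qrow n p c)) =
    -kap / (α * (p + 1)) * (be n p (i + 1) * sg n p i) * JJ n p α (vv n p i) (qrow n p c) := by ring
  have e2' : ∀ t y : ℝ, t * ga n p (i + 1) * (ta n p (i + 1) * y) =
    t * (ga n p (i + 1) * ta n p (i + 1)) * y := fun t y => by ring
  rw [e1', e2', e1, e2, mul_assoc _ (ga n p i), e4]
  unfold L1d DD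
  push_cast
  generalize JJ n p α (uu n p i) (qrow n p c) = a1
  generalize JJ n p α (vv n p i) (qrow n p c) = a2
  generalize JJ n p α (uu n p (i + 1)) (qrow n p c) = a3
  generalize JJ n p α (lo n p i) (qrow n p c) = a4
  generalize ta n p i = t
  have : (n : ℝ) - p + i + 1 ≠ 0 := by positivity
  have : p + i ≠ 0 := by positivity
  have : (n : ℝ) + 2 * i + 1 ≠ 0 := by positivity
  have : (n : ℝ) - p ≠ 0 := hq.ne'
  field_simp
  ring

lemma even_row (n : ℕ) (p : ℝ) (hp : 0 < p) (hpn : p < n) (kap α : ℝ)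
    (hα0 : α ≠ 0) (N : ℕ) (hp2 : (n : ℝ) - 2 * p ≠ 0)
    (hk : kap * (n - 2 * p) = (n - p + N + 1) * (p + N + 1)) (i c : ℕ) :
    L1b n p α N (i + 1) * MM n p α (2 * i + 1) c =
    sg n p i / (α * (p + 1) * (n - p)) * (-p * kap * JJ n p α (uu n p i) (qrow n p c)) := by
  have hq : (0 : ℝ) < n - p := by linarith
  unfold MM
  rw [qrow_odd n p hpn i, JJ_smul, L1b_eq n p α N (i + 1) kap hp2 hk hα0 hp]
  have e1 := be_ta n p hp hpn i
  have e1' : ∀ y, -kap / (α * (p + 1)) * be n p (i + 1) * (ta n p i * y) =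
    -kap / (α * (p + 1)) * (be n p (i + 1) * ta n p i) * y := fun y => by ring
  rw [e1', e1]
  field_simp

/-- Entries of `L₁`, natural number indices. -/
noncomputable def LL (n : ℕ) (p α : ℝ) (N : ℕ) (i j : ℕ) : ℝ :=
    if i = j ∧ i % 2 = 1 then L1d n p ((i + 1) / 2)
    else if j = i + 1 ∧ i % 2 = 0 then L1b n p α N ((j + 1) / 2)
    else if i = j + 1 ∧ j % 2 = 0 then L1b n p α N ((i + 1) / 2)
    else if j = i + 2 ∧ i % 2 = 1 then L1c n p α N ((i + 1) / 2)
    else if i = j + 2 ∧ j % 2 = 1 then L1c n p α N ((j + 1) / 2)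
    else 0

lemma L1_eq (n : ℕ) (p α : ℝ) (N : ℕ) (r c : Fin (2 * (N + 1))) :
    L1 n p α N r c = LL n p α N r c := by
  unfold L1 LL
  simp only [Matrix.of_apply]
  have h1 : (r.val + 1 = c.val + 1 ∧ (r.val + 1) % 2 = 0) ↔ (r.val = c.val ∧ r.val % 2 = 1) := by omega
  have h2 : (c.val + 1 = r.val + 1 + 1 ∧ (r.val + 1) % 2 = 1) ↔
    (c.val = r.val + 1 ∧ r.val % 2 = 0) := by omega
  have h3 : (r.val + 1 = c.val + 1 + 1 ∧ (c.val + 1) % 2 = 1) ↔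
    (r.val = c.val + 1 ∧ c.val % 2 = 0) := by omega
  have h4 : (c.val + 1 = r.val + 1 + 2 ∧ (r.val + 1) % 2 = 0) ↔
    (c.val = r.val + 2 ∧ r.val % 2 = 1) := by omega
  have h5 : (r.val + 1 = c.val + 1 + 2 ∧ (c.val + 1) % 2 = 0) ↔
    (r.val = c.val + 2 ∧ c.val % 2 = 1) := by omega
  simp only [h1, h2, h3, h4, h5]

lemma LL_even (n : ℕ) (p α : ℝ) (N i s : ℕ) :
    LL n p α N (2 * i) s = if s = 2 * i + 1 then L1b n p α N (i + 1) else 0 := by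
  unfold LL
  rw [if_neg (by omega)]
  by_cases h : s = 2 * i + 1
  · subst h
    rw [if_pos (by omega), if_pos rfl]
    congr 1
    omega
  · rw [if_neg (by omega), if_neg (by omega), if_neg (by omega), if_neg (by omega), if_neg h]

lemma LL_odd (n : ℕ) (p α : ℝ) (N i s : ℕ) :
    LL n p α N (2 * i + 1) s = (if s = 2 * i + 1 then L1d n p (i + 1) else 0) +
      (if s = 2 * i then L1b n p α N (i + 1) else 0) +
      (if s = 2 * (i + 1) + 1 then L1c n p α N (i + 1) else 0) +
      (if s = 2 * (i - 1) + 1 then L1c n p α N i else 0) := by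
  have h0 : L1c n p α N 0 = 0 := by simp [L1c]
  have hd1 : (2 * i + 1 + 1) / 2 = i + 1 := by omega
  unfold LL
  by_cases h1 : s = 2 * i + 1
  · subst h1
    rw [if_pos (by omega), if_pos rfl, if_neg (by omega), if_neg (by omega), hd1]
    rcases Nat.eq_zero_or_pos i with rfl | hi
    · simp [h0]
    · rw [if_neg (by omega)]; ring
  rw [if_neg (by omega), if_neg (by omega), if_neg h1]
  by_cases h2 : s = 2 * i
  · subst h2
    rw [if_pos (by omega), if_pos rfl, if_neg (by omega), if_neg (by omega), hd1]; ring
  rw [if_neg (by omega), if_neg h2]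
  by_cases h3 : s = 2 * (i + 1) + 1
  · subst h3
    rw [if_pos (by omega), if_pos rfl, if_neg (by omega), hd1]; ring
  rw [if_neg (by omega), if_neg h3]
  by_cases h4 : s = 2 * (i - 1) + 1
  · have hi : 0 < i := by omega
    rw [if_pos (by omega), if_pos h4, show (s + 1) / 2 = i by omega]; ring
  rw [if_neg (by omega), if_neg h4]; ring

lemma LL_symm (n : ℕ) (p α : ℝ) (N i j : ℕ) : LL n p α N i j = LL n p α N j i := by
  unfold LL
  split_ifs <;> first | rfl | omega | (congr 1; omega)

lemma sum_even (n : ℕ) (p α : ℝ) (N i : ℕ) (hi : i < N + 1) (c : ℕ) :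
    ∑ s ∈ Finset.range (2 * (N + 1)), LL n p α N (2 * i) s * MM n p α s c =
      L1b n p α N (i + 1) * MM n p α (2 * i + 1) c := by
  simp only [LL_even, ite_mul, zero_mul]
  rw [Finset.sum_ite_eq', if_pos (Finset.mem_range.2 (by omega))]

lemma sum_odd (n : ℕ) (p α : ℝ) (N i : ℕ) (hi : i < N + 1) (c : ℕ) :
    ∑ s ∈ Finset.range (2 * (N + 1)), LL n p α N (2 * i + 1) s * MM n p α s c =
      L1d n p (i + 1) * MM n p α (2 * i + 1) c + L1b n p α N (i + 1) * MM n p α (2 * i) c +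
      L1c n p α N (i + 1) * MM n p α (2 * (i + 1) + 1) c +
      L1c n p α N i * MM n p α (2 * (i - 1) + 1) c := by
  simp only [LL_odd, add_mul, ite_mul, zero_mul, Finset.sum_add_distrib]
  have m1 : 2 * i + 1 ∈ Finset.range (2 * (N + 1)) := Finset.mem_range.2 (by omega)
  have m2 : 2 * i ∈ Finset.range (2 * (N + 1)) := Finset.mem_range.2 (by omega)
  have m4 : 2 * (i - 1) + 1 ∈ Finset.range (2 * (N + 1)) := Finset.mem_range.2 (by omega)
  rw [Finset.sum_ite_eq', Finset.sum_ite_eq', Finset.sum_ite_eq', Finset.sum_ite_eq',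
    if_pos m1, if_pos m2, if_pos m4]
  by_cases h : 2 * (i + 1) + 1 ∈ Finset.range (2 * (N + 1))
  · rw [if_pos h]
  · rw [if_neg h]
    rw [Finset.mem_range] at h
    have hN : i = N := by omega
    have hz : L1c n p α N (i + 1) = 0 := by
      unfold L1c
      rw [hN]
      push_cast
      rw [show (N : ℝ) - (N + 1) + 1 = 0 by ring]
      simp
    rw [hz, zero_mul]

lemma sum_symm (n : ℕ) (hn : 1 ≤ n) (p : ℝ) (hp : 0 < p) (hpn : p < n)
    (N : ℕ) (α : ℝ) (hα : α ∈ Set.Ioo (-1 : ℝ) 1) (hα0 : α ≠ 0)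
    (hp2 : p ≠ (n : ℝ) / 2) (r c : ℕ) (hr : r < 2 * (N + 1)) (hc : c < 2 * (N + 1)) :
    ∑ s ∈ Finset.range (2 * (N + 1)), LL n p α N r s * MM n p α s c =
    ∑ s ∈ Finset.range (2 * (N + 1)), LL n p α N c s * MM n p α s r := by
  have hp2' : (n : ℝ) - 2 * p ≠ 0 := fun h => hp2 (by linarith)
  obtain ⟨kap, hk⟩ : ∃ kap : ℝ, kap * (n - 2 * p) = (n - p + N + 1) * (p + N + 1) :=
    ⟨(n - p + N + 1) * (p + N + 1) / (n - 2 * p), div_mul_cancel₀ _ hp2'⟩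
  have eo : ∀ i j : ℕ, 2 * i < 2 * (N + 1) → 2 * j + 1 < 2 * (N + 1) →
      ∑ s ∈ Finset.range (2 * (N + 1)), LL n p α N (2 * i) s * MM n p α s (2 * j + 1) =
      ∑ s ∈ Finset.range (2 * (N + 1)), LL n p α N (2 * j + 1) s * MM n p α s (2 * i) := by
    intro i j hi hj
    rw [sum_even n p α N i (by omega), sum_odd n p α N j (by omega),
      odd_row n hn p hp hpn kap α hα hα0 N hp2' hk, even_row n p hp hpn kap α hα0 N hp2' hk,
      qrow_even n p hp, qrow_odd n p hpn, JJ_comm _ _ _ (RR n p kap α j), JJ_smul,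
      JJ_comm _ _ _ _ (RR n p kap α j), ← core12 n hn p kap α hα,
      JJ_comm _ _ _ (uu n p i), JJ_smul, JJ_comm _ _ _ (uu n p j)]
    ring
  rcases Nat.even_or_odd' r with ⟨i, rfl | rfl⟩ <;> rcases Nat.even_or_odd' c with ⟨j, rfl | rfl⟩
  · rw [sum_even n p α N i (by omega), sum_even n p α N j (by omega),
      even_row n p hp hpn kap α hα0 N hp2' hk, even_row n p hp hpn kap α hα0 N hp2' hk,
      qrow_even n p hp, qrow_even n p hp, JJ_comm _ _ _ (uu n p i), JJ_smul,
      JJ_comm _ _ _ (uu n p j), JJ_smul, JJ_comm _ _ _ _ (uu n p i), core11 n p α i j,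
      JJ_comm _ _ _ _ (uu n p j)]
    ring
  · exact eo i j hr hc
  · exact (eo j i hc hr).symm
  · rw [sum_odd n p α N i (by omega), sum_odd n p α N j (by omega),
      odd_row n hn p hp hpn kap α hα hα0 N hp2' hk, odd_row n hn p hp hpn kap α hα hα0 N hp2' hk,
      qrow_odd n p hpn, qrow_odd n p hpn, JJ_comm _ _ _ (RR n p kap α i), JJ_smul,
      JJ_comm _ _ _ (RR n p kap α j), JJ_smul, JJ_comm _ _ _ _ (RR n p kap α i),
      core22 n hn p kap α hα i j, JJ_comm _ _ _ _ (RR n p kap α j)]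
    ring

/-- `L_1` commutes with `M`. -/
theorem stmt_9 (n : ℕ) (hn : 1 ≤ n) (p : ℝ) (hp : 0 < p) (hpn : p < n)
    (N : ℕ) (α : ℝ) (hα : α ∈ Set.Ioo (-1 : ℝ) 1) (hα0 : α ≠ 0)
    (hp2 : p ≠ (n : ℝ) / 2) :
    L1 n p α N * Mfull n p α N = Mfull n p α N * L1 n p α N := by
  ext r c
  have h := sum_symm n hn p hp hpn N α hα hα0 hp2 r c r.2 c.2
  rw [Finset.sum_range, Finset.sum_range] at h
  simp only [Matrix.mul_apply, L1_eq, Mfull_eq]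
  rw [h]
  refine Finset.sum_congr rfl fun s _ => ?_
  rw [LL_symm n p α N c s, mul_comm]
  congr 1
  exact JJ_comm ..
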